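/- Let K be the group with presentation ⟨x, y | x³ = y³ = [x,y]² = 1⟩. Then K has order 288, the abelianization K/K' is isomorphic to C_3 × C_3, and the second derived subgroup K'' is isomorphic to C_2. -/

import Mathlib

/-- The relators `x³`, `y³`, `[x,y]²` in the free group on two generators. -/
def rels19 : Set (FreeGroup (Fin 2)) :=
  { (FreeGroup.of 0) ^ 3, (FreeGroup.of 1) ^ 3,
    ((FreeGroup.of 0)⁻¹ * (FreeGroup.of 1)⁻¹ * FreeGroup.of 0 * FreeGroup.of 1) ^ 2 }

/-- `K = ⟨x, y ∣ x³ = y³ = [x,y]² = 1⟩`. -/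
abbrev K19 : Type := PresentedGroup rels19

section helpers

variable {G : Type*} [Group G]

/-- The subgroup generated by four commutators. -/
def N19 (x y : G) : Subgroup G :=
  Subgroup.closure {x⁻¹ * y⁻¹ * x * y, x * y⁻¹ * x⁻¹ * y, x * y * x⁻¹ * y⁻¹, x⁻¹ * y * x * y⁻¹}

lemma inv_of_cube {x : G} (h : x ^ 3 = 1) : x⁻¹ = x * x := by
  rw [inv_eq_iff_mul_eq_one, ← h, pow_succ, pow_two, mul_assoc]

lemma cube_a {x : G} (h : x ^ 3 = 1) : x * (x * x) = 1 := by
  rw [← h, pow_succ, pow_two, mul_assoc]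

lemma cube_b {x : G} (h : x ^ 3 = 1) (w : G) : x * (x * (x * w)) = w := by
  rw [← mul_assoc x x w, ← mul_assoc, cube_a h, one_mul]

lemma conj_sq {g h u : G} (hu : u * u = 1) (e : g⁻¹ * u * g = h) : h * h = 1 := by
  subst e
  calc g⁻¹ * u * g * (g⁻¹ * u * g) = g⁻¹ * (u * u) * g := by group
    _ = 1 := by rw [hu]; group

lemma inv_of_sq {u : G} (hu : u * u = 1) : u⁻¹ = u := inv_eq_of_mul_eq_one_left hu

lemma comm_of_sq {u v : G} (hu : u * u = 1) (hv : v * v = 1) (huv : u * v * (u * v) = 1) :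
    u * v = v * u := by
  have := inv_of_sq huv
  rw [mul_inv_rev, inv_of_sq hu, inv_of_sq hv] at this
  exact this.symm

/-- conjugation table -/
lemma table {x y : G} (hx : x ^ 3 = 1) (hy : y ^ 3 = 1) {a b c d : G}
    (ha : a = x⁻¹ * y⁻¹ * x * y) (hb : b = x * y⁻¹ * x⁻¹ * y)
    (hc : c = x * y * x⁻¹ * y⁻¹) (hd : d = x⁻¹ * y * x * y⁻¹) :
    (x⁻¹ * a * x = b * a⁻¹ ∧ x⁻¹ * b * x = a⁻¹ ∧ x⁻¹ * c * x = d⁻¹ ∧ x⁻¹ * d * x = c * d⁻¹) ∧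
    (y⁻¹ * a * y = a⁻¹ * d ∧ y⁻¹ * b * y = b⁻¹ * c ∧ y⁻¹ * c * y = b⁻¹ ∧ y⁻¹ * d * y = a⁻¹) := by
  subst ha hb hc hd
  refine ⟨⟨?_, ?_, ?_, ?_⟩, ?_, ?_, ?_, ?_⟩ <;>
  simp only [mul_inv_rev, inv_inv] <;>
  simp only [inv_of_cube hx, inv_of_cube hy, mul_assoc, cube_a hx, cube_b hx, cube_a hy,
    cube_b hy, mul_one]

lemma relsN {x y : G} (hx : x ^ 3 = 1) (hy : y ^ 3 = 1) {a b c d : G}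
    (ha : a = x⁻¹ * y⁻¹ * x * y) (hb : b = x * y⁻¹ * x⁻¹ * y)
    (hc : c = x * y * x⁻¹ * y⁻¹) (hd : d = x⁻¹ * y * x * y⁻¹) (h : a * a = 1) :
    (a * a = 1 ∧ b * b = 1 ∧ c * c = 1 ∧ d * d = 1) ∧
    (a * b = b * a ∧ a * d = d * a ∧ c * b = b * c ∧ c * d = d * c) ∧
    a * c * (a * c) = b * d * (b * d) ∧ a * c * (a * c) * (a * c * (a * c)) = 1 := by
  obtain ⟨⟨xa, xb, xc, xd⟩, ya, yb, yc, yd⟩ := table hx hy ha hb hc hd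
  have aa := h
  have ia := inv_of_sq aa
  have dd : d * d = 1 := by
    rw [ia] at yd
    refine conj_sq (g := y⁻¹) aa ?_
    rw [← yd]; group
  have id := inv_of_sq dd
  have bb : b * b = 1 := by
    rw [ia] at xb
    refine conj_sq (g := x⁻¹) aa ?_
    rw [← xb]; group
  have ib := inv_of_sq bb
  have cc : c * c = 1 := by
    rw [id] at xc
    refine conj_sq (g := x⁻¹) dd ?_
    rw [← xc]; group
  have ic := inv_of_sq cc
  rw [ia] at xa ya yd xb
  rw [id] at xc xd
  rw [ib] at yb yc
  have ba := comm_of_sq bb aa (conj_sq aa xa)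
  have cd := comm_of_sq cc dd (conj_sq dd xd)
  have ad := comm_of_sq aa dd (conj_sq aa ya)
  have bc := comm_of_sq bb cc (conj_sq bb yb)
  have e : y⁻¹ * (b * a) * y = b * c * (a * d) := by
    rw [← yb, ← ya]; group
  have r := conj_sq (conj_sq aa xa) e
  have r2 : (a * c * (a * c)) * (b * d * (b * d)) = 1 := by
    have e1 : b * c * (a * d) = (c * a) * (b * d) := by
      rw [bc, mul_assoc, ← mul_assoc b a, ba]; simp only [mul_assoc]
    have C : Commute (c * a) (b * d) := by
      have h1 : Commute c b := bc.symm
      have h2 : Commute c d := cd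
      have h3 : Commute a b := ba.symm
      have h4 : Commute a d := ad
      exact (h1.mul_right h2).mul_left (h3.mul_right h4)
    rw [e1] at r
    have r3 : (c * a * (c * a)) * (b * d * (b * d)) = 1 := by
      rw [← r]
      have := C.eq
      calc (c * a * (c * a)) * (b * d * (b * d)) = c * a * ((c * a) * (b * d)) * (b * d) := by group
        _ = c * a * ((b * d) * (c * a)) * (b * d) := by rw [this]
        _ = _ := by group
    have C2 : Commute a (b * d * (b * d)) := by
      have h3 : Commute a b := ba.symm
      have h4 : Commute a d := ad
      exact (h3.mul_right h4).mul_right (h3.mul_right h4)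
    have : a * ((c * a * (c * a)) * (b * d * (b * d))) * a⁻¹ = 1 := by rw [r3]; group
    calc _ = a * (c * a * (c * a)) * (a⁻¹ * (b * d * (b * d))) := by group
      _ = a * (c * a * (c * a)) * ((b * d * (b * d)) * a⁻¹) := by rw [C2.inv_left.eq]
      _ = 1 := by rw [← this]; group
  -- z = (ac)^2 commutes with a, c
  have C3 : Commute a (b * d * (b * d)) := by
    have h3 : Commute a b := ba.symm
    have h4 : Commute a d := ad
    exact (h3.mul_right h4).mul_right (h3.mul_right h4)
  have z1 : a * c * (a * c) = (b * d * (b * d))⁻¹ := eq_inv_of_mul_eq_one_left r2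
  have C4 : Commute a (a * c * (a * c)) := by rw [z1]; exact C3.inv_right
  have z2 : a * c * (a * c) * (a * c * (a * c)) = 1 := by
    have : a * (a * c * (a * c)) * a = (a * c * (a * c))⁻¹ := by
      simp only [mul_inv_rev, ia, ic]
      rw [← mul_assoc, ← mul_assoc, ← mul_assoc, aa]; simp only [mul_assoc, one_mul]
    rw [C4.eq, mul_assoc, aa, mul_one] at this
    nth_rewrite 1 [this]
    exact inv_mul_cancel _
  refine ⟨⟨aa, bb, cc, dd⟩, ⟨ba.symm, ad, bc.symm, cd⟩, ?_, z2⟩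
  rw [← inv_of_sq z2, z1, inv_inv]

lemma N19_conj {x y : G} (hx : x ^ 3 = 1) (hy : y ^ 3 = 1) (n : G) (hn : n ∈ N19 x y) :
    x⁻¹ * n * x ∈ N19 x y ∧ y⁻¹ * n * y ∈ N19 x y := by
  obtain ⟨⟨xa, xb, xc, xd⟩, ya, yb, yc, yd⟩ := table hx hy rfl rfl rfl rfl
  have ma : x⁻¹ * y⁻¹ * x * y ∈ N19 x y := Subgroup.subset_closure (by simp)
  have mb : x * y⁻¹ * x⁻¹ * y ∈ N19 x y := Subgroup.subset_closure (by simp)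
  have mc : x * y * x⁻¹ * y⁻¹ ∈ N19 x y := Subgroup.subset_closure (by simp)
  have md : x⁻¹ * y * x * y⁻¹ ∈ N19 x y := Subgroup.subset_closure (by simp)
  induction hn using Subgroup.closure_induction with
  | mem g hg =>
    rcases hg with rfl | rfl | rfl | rfl
    · rw [xa, ya]; exact ⟨mul_mem mb (inv_mem ma), mul_mem (inv_mem ma) md⟩
    · rw [xb, yb]; exact ⟨inv_mem ma, mul_mem (inv_mem mb) mc⟩
    · rw [xc, yc]; exact ⟨inv_mem md, inv_mem mb⟩
    · rw [xd, yd]; exact ⟨mul_mem mc (inv_mem md), inv_mem ma⟩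
  | one => simp [one_mem]
  | mul u v _ _ hu hv =>
    refine ⟨?_, ?_⟩
    · have := mul_mem hu.1 hv.1
      convert this using 1; group
    · have := mul_mem hu.2 hv.2
      convert this using 1; group
  | inv u _ hu =>
    refine ⟨?_, ?_⟩
    · have := inv_mem hu.1
      convert this using 1; group
    · have := inv_mem hu.2
      convert this using 1; group

lemma mem_normalizer_aux {x : G} (hx : x ^ 3 = 1) (N : Subgroup G)
    (h : ∀ n ∈ N, x⁻¹ * n * x ∈ N) : x ∈ Subgroup.normalizer (N : Set G) := by
  have h' : ∀ n ∈ N, x * n * x⁻¹ ∈ N := by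
    intro n hn
    have := h _ (h n hn)
    convert this using 1
    simp only [inv_of_cube hx, mul_assoc, cube_a hx, cube_b hx]
  rw [Subgroup.mem_normalizer_iff]
  intro n
  refine ⟨h' n, fun hn => ?_⟩
  have := h _ hn
  convert this using 1; group

lemma N19_normal {x y : G} (hx : x ^ 3 = 1) (hy : y ^ 3 = 1)
    (hg : Subgroup.closure {x, y} = ⊤) : (N19 x y).Normal := by
  rw [← Subgroup.normalizer_eq_top_iff, eq_top_iff, ← hg, Subgroup.closure_le]
  rintro g (rfl | rfl)
  · exact mem_normalizer_aux hx _ fun n hn => (N19_conj hx hy n hn).1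
  · exact mem_normalizer_aux hy _ fun n hn => (N19_conj hx hy n hn).2

lemma gen_word {x y : G} (hx : x ^ 3 = 1) (hy : y ^ 3 = 1)
    (hg : Subgroup.closure {x, y} = ⊤) (H : Subgroup G) [H.Normal] (hH : x⁻¹ * y⁻¹ * x * y ∈ H)
    (g : G) : ∃ i j : ℕ, ((g : G) : G ⧸ H) = (x : G ⧸ H) ^ i * (y : G ⧸ H) ^ j := by
  have cm : Commute (x : G ⧸ H) (y : G ⧸ H) := by
    have : ((x⁻¹ * y⁻¹ * x * y : G) : G ⧸ H) = 1 := (QuotientGroup.eq_one_iff _).2 hH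
    have e : ((x : G ⧸ H))⁻¹ * (y : G ⧸ H)⁻¹ * x * y = 1 := this
    have e2 : (y * x : G ⧸ H) * ((x : G ⧸ H)⁻¹ * (y : G ⧸ H)⁻¹ * x * y) = y * x := by rw [e, mul_one]
    rw [Commute, SemiconjBy, ← e2]; group
  have hx' : (x : G ⧸ H) ^ 3 = 1 := by rw [← QuotientGroup.mk_pow, hx]; rfl
  have hy' : (y : G ⧸ H) ^ 3 = 1 := by rw [← QuotientGroup.mk_pow, hy]; rfl
  have hm : g ∈ Subgroup.closure {x, y} := by rw [hg]; trivial
  induction hm using Subgroup.closure_induction with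
  | mem g hg =>
    rcases hg with rfl | rfl
    · exact ⟨1, 0, by simp⟩
    · exact ⟨0, 1, by simp⟩
  | one => exact ⟨0, 0, by simp⟩
  | mul u v _ _ hu hv =>
    obtain ⟨i, j, h1⟩ := hu
    obtain ⟨k, l, h2⟩ := hv
    refine ⟨i + k, j + l, ?_⟩
    rw [QuotientGroup.mk_mul, h1, h2, pow_add, pow_add]
    have := ((cm.pow_pow k j).eq)
    simp only [mul_assoc]
    rw [← mul_assoc ((x : G ⧸ H) ^ k), this]
    simp only [mul_assoc]
  | inv u _ hu =>
    obtain ⟨i, j, h1⟩ := hu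
    refine ⟨2 * i, 2 * j, ?_⟩
    rw [QuotientGroup.mk_inv, h1, inv_eq_iff_mul_eq_one]
    have := ((cm.pow_pow (2 * i) j).eq)
    calc _ = (x : G ⧸ H) ^ i * ((y : G ⧸ H) ^ j * (x : G ⧸ H) ^ (2 * i)) * (y : G ⧸ H) ^ (2 * j) := by
          simp only [mul_assoc]
      _ = ((x : G ⧸ H) ^ 3) ^ i * ((y : G ⧸ H) ^ 3) ^ j := by
          rw [← this, ← pow_mul, ← pow_mul, show 3 * i = i + 2 * i by ring,
            show 3 * j = j + 2 * j by ring, pow_add, pow_add]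
          simp only [mul_assoc]
      _ = 1 := by rw [hx', hy']; simp

lemma N19_eq {x y : G} (hx : x ^ 3 = 1) (hy : y ^ 3 = 1)
    (hg : Subgroup.closure {x, y} = ⊤) : commutator G = N19 x y := by
  have cmem : ∀ u v : G, u * v * u⁻¹ * v⁻¹ ∈ commutator G := fun u v =>
    Subgroup.commutator_mem_commutator (Subgroup.mem_top u) (Subgroup.mem_top v)
  apply le_antisymm
  · have := N19_normal hx hy hg
    have ha : x⁻¹ * y⁻¹ * x * y ∈ N19 x y := Subgroup.subset_closure (by simp)
    have cm : Commute (x : G ⧸ N19 x y) (y : G ⧸ N19 x y) := by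
      have : ((x⁻¹ * y⁻¹ * x * y : G) : G ⧸ N19 x y) = 1 := (QuotientGroup.eq_one_iff _).2 ha
      have e : ((x : G ⧸ N19 x y))⁻¹ * (y : G ⧸ N19 x y)⁻¹ * x * y = 1 := this
      have e2 : (y * x : G ⧸ N19 x y) * ((x : G ⧸ N19 x y)⁻¹ * (y : G ⧸ N19 x y)⁻¹ * x * y) = y * x := by
        rw [e, mul_one]
      rw [Commute, SemiconjBy, ← e2]; group
    rw [commutator_def, Subgroup.commutator_le]
    intro u _ v _
    rw [← QuotientGroup.eq_one_iff]
    obtain ⟨i, j, h1⟩ := gen_word hx hy hg (N19 x y) ha u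
    obtain ⟨k, l, h2⟩ := gen_word hx hy hg (N19 x y) ha v
    have : Commute (u : G ⧸ N19 x y) (v : G ⧸ N19 x y) := by
      rw [h1, h2]
      exact (((Commute.refl _).pow_pow i k).mul_right (cm.pow_pow i l)).mul_left
        ((cm.symm.pow_pow j k).mul_right ((Commute.refl _).pow_pow j l))
    change (u : G ⧸ N19 x y) * v * (u : G ⧸ N19 x y)⁻¹ * (v : G ⧸ N19 x y)⁻¹ = 1
    rw [this.eq]; group
  · rw [N19, Subgroup.closure_le]
    rintro g (rfl | rfl | rfl | rfl)
    · simpa using cmem x⁻¹ y⁻¹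
    · simpa using cmem x y⁻¹
    · simpa using cmem x y
    · simpa using cmem x⁻¹ y

/-- The consequences of the relations that are used below. -/
structure Rel19 (a b c d z : G) : Prop where
  aa : a * a = 1
  bb : b * b = 1
  cc : c * c = 1
  dd : d * d = 1
  ab : Commute a b
  ad : Commute a d
  cb : Commute c b
  cd : Commute c d
  az : Commute a z
  bz : Commute b z
  cz : Commute c z
  dz : Commute d z
  zz : z * z = 1
  ca : c * a = a * c * z
  db : d * b = b * d * z
  hz : z = a * c * a⁻¹ * c⁻¹

lemma swap_aux {a c z : G} (aa : a * a = 1) (cc : c * c = 1) (hz : z = a * c * (a * c))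
    (zz : z * z = 1) (h : Commute z (a * c)) : c * a = a * c * z := by
  have : z * (c * a) = a * c := by
    calc z * (c * a) = a * c * a * (c * c) * a := by rw [hz]; simp only [mul_assoc]
      _ = a * c * (a * a) := by rw [cc]; simp only [mul_assoc, one_mul]
      _ = a * c := by rw [aa, mul_one]
  rw [← h.eq, ← this, ← mul_assoc, zz, one_mul]

lemma mkRel {x y : G} (hx : x ^ 3 = 1) (hy : y ^ 3 = 1) {a b c d : G}
    (ha : a = x⁻¹ * y⁻¹ * x * y) (hb : b = x * y⁻¹ * x⁻¹ * y)
    (hc : c = x * y * x⁻¹ * y⁻¹) (hd : d = x⁻¹ * y * x * y⁻¹) (h : a * a = 1) :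
    Rel19 a b c d (a * c * (a * c)) := by
  obtain ⟨⟨aa, bb, cc, dd⟩, ⟨ab, ad, cb, cd⟩, z1, z2⟩ := relsN hx hy ha hb hc hd h
  have ia := inv_of_sq aa
  have ic := inv_of_sq cc
  have hab : Commute a b := ab
  have had : Commute a d := ad
  have hcb : Commute c b := cb
  have hcd : Commute c d := cd
  have bz : Commute b (a * c * (a * c)) :=
    (hab.symm.mul_right hcb.symm).mul_right (hab.symm.mul_right hcb.symm)
  have dz : Commute d (a * c * (a * c)) :=
    (had.symm.mul_right hcd.symm).mul_right (had.symm.mul_right hcd.symm)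
  have az : Commute a (a * c * (a * c)) := by
    rw [z1]; exact (hab.mul_right had).mul_right (hab.mul_right had)
  have cz : Commute c (a * c * (a * c)) := by
    rw [z1]; exact (hcb.mul_right hcd).mul_right (hcb.mul_right hcd)
  exact ⟨aa, bb, cc, dd, ab, ad, cb, cd, az, bz, cz, dz, z2,
    swap_aux aa cc rfl z2 (az.mul_left cz).symm, swap_aux bb dd z1 z2 (bz.mul_left dz).symm,
    by rw [ia, ic]; simp only [mul_assoc]⟩

lemma Rel19.induct {a b c d z : G} (R : Rel19 a b c d z) {P : G → Prop} (h1 : P 1)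
    (ha : ∀ n, P n → P (a * n)) (hb : ∀ n, P n → P (b * n)) (hc : ∀ n, P n → P (c * n))
    (hd : ∀ n, P n → P (d * n)) (n : G) (hn : n ∈ Subgroup.closure {a, b, c, d}) : P n := by
  induction hn using Subgroup.closure_induction_left with
  | one => exact h1
  | mul_left g hg n _ ih =>
    rcases hg with rfl | rfl | rfl | rfl
    · exact ha _ ih
    · exact hb _ ih
    · exact hc _ ih
    · exact hd _ ih
  | inv_mul_cancel g hg n _ ih =>
    rcases hg with rfl | rfl | rfl | rfl
    · rw [inv_of_sq R.aa]; exact ha _ ih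
    · rw [inv_of_sq R.bb]; exact hb _ ih
    · rw [inv_of_sq R.cc]; exact hc _ ih
    · rw [inv_of_sq R.dd]; exact hd _ ih

lemma Rel19.comm_z {a b c d z : G} (R : Rel19 a b c d z) (n : G)
    (hn : n ∈ Subgroup.closure {a, b, c, d}) : Commute n z := by
  refine R.induct (P := fun n => Commute n z) (Commute.one_left _) ?_ ?_ ?_ ?_ n hn
  · exact fun n h => R.az.mul_left h
  · exact fun n h => R.bz.mul_left h
  · exact fun n h => R.cz.mul_left h
  · exact fun n h => R.dz.mul_left h

lemma step_aux {g n v z : G} (gz : Commute g z) (nz : Commute n z)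
    (hg : ∃ k : ℕ, g * v = v * g * z ^ k) (hn : ∃ k : ℕ, n * v = v * n * z ^ k) :
    ∃ k : ℕ, g * n * v = v * (g * n) * z ^ k := by
  obtain ⟨k, hk⟩ := hg
  obtain ⟨l, hl⟩ := hn
  refine ⟨k + l, ?_⟩
  calc g * n * v = g * v * n * z ^ l := by rw [mul_assoc, hl]; simp only [mul_assoc]
    _ = v * g * (z ^ k * n) * z ^ l := by rw [hk]; simp only [mul_assoc]
    _ = _ := by rw [← (nz.pow_right k).eq, pow_add]; simp only [mul_assoc]

lemma flip_aux {u v z : G} (zz : z * z = 1) (uz : Commute u z) (vz : Commute v z)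
    (h : ∃ k : ℕ, u * v = v * u * z ^ k) : ∃ k : ℕ, v * u = u * v * z ^ k := by
  obtain ⟨k, hk⟩ := h
  refine ⟨k, ?_⟩
  have : z ^ k * z ^ k = 1 := by
    rw [← (Commute.refl z).mul_pow, zz, one_pow]
  rw [hk, mul_assoc, this, mul_one]

lemma Rel19.swap {a b c d z : G} (R : Rel19 a b c d z) (u v : G)
    (hu : u ∈ Subgroup.closure {a, b, c, d}) (hv : v ∈ Subgroup.closure {a, b, c, d}) :
    ∃ k : ℕ, u * v = v * u * z ^ k := by
  have main : ∀ g : G, Commute g z → (∃ k : ℕ, a * g = g * a * z ^ k) →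
      (∃ k : ℕ, b * g = g * b * z ^ k) → (∃ k : ℕ, c * g = g * c * z ^ k) →
      (∃ k : ℕ, d * g = g * d * z ^ k) → ∀ n ∈ Subgroup.closure {a, b, c, d},
      ∃ k : ℕ, n * g = g * n * z ^ k := by
    intro g gz ha hb hc hd n hn
    refine (R.induct (P := fun n => Commute n z ∧ ∃ k : ℕ, n * g = g * n * z ^ k)
      ⟨Commute.one_left _, 0, by simp⟩ ?_ ?_ ?_ ?_ n hn).2
    · exact fun n h => ⟨R.az.mul_left h.1, step_aux R.az h.1 ha h.2⟩
    · exact fun n h => ⟨R.bz.mul_left h.1, step_aux R.bz h.1 hb h.2⟩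
    · exact fun n h => ⟨R.cz.mul_left h.1, step_aux R.cz h.1 hc h.2⟩
    · exact fun n h => ⟨R.dz.mul_left h.1, step_aux R.dz h.1 hd h.2⟩
  have triv : ∀ g h : G, Commute g h → ∃ k : ℕ, g * h = h * g * z ^ k :=
    fun g h e => ⟨0, by simpa using e.eq⟩
  have hca : ∃ k : ℕ, c * a = a * c * z ^ k := ⟨1, by simpa using R.ca⟩
  have hdb : ∃ k : ℕ, d * b = b * d * z ^ k := ⟨1, by simpa using R.db⟩
  have hac := flip_aux R.zz R.cz R.az hca
  have hbd := flip_aux R.zz R.dz R.bz hdb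
  have nz := R.comm_z u hu
  refine flip_aux R.zz (R.comm_z v hv) nz (main u nz ?_ ?_ ?_ ?_ v hv)
  · exact flip_aux R.zz nz R.az (main a R.az (triv _ _ (Commute.refl a)) (triv _ _ R.ab.symm) hca
      (triv _ _ R.ad.symm) u hu)
  · exact flip_aux R.zz nz R.bz (main b R.bz (triv _ _ R.ab) (triv _ _ (Commute.refl b))
      (triv _ _ R.cb) hdb u hu)
  · exact flip_aux R.zz nz R.cz (main c R.cz hac (triv _ _ R.cb.symm)
      (triv _ _ (Commute.refl c)) (triv _ _ R.cd.symm) u hu)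
  · exact flip_aux R.zz nz R.dz (main d R.dz (triv _ _ R.ad) hbd
      (triv _ _ R.cd) (triv _ _ (Commute.refl d)) u hu)

/-- Normal form. -/
def nf19 (a b c d z : G) (p r t q s : ℕ) : G := a ^ p * c ^ r * z ^ t * b ^ q * d ^ s

lemma pow_swap {a c z : G} (h : c * a = a * c * z) (az : Commute a z) (p : ℕ) :
    c * a ^ p = a ^ p * c * z ^ p := by
  induction p with
  | zero => simp
  | succ p ih =>
    calc c * a ^ (p + 1) = a ^ p * c * (z ^ p * a) := by rw [pow_succ, ← mul_assoc, ih, mul_assoc]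
      _ = a ^ p * (c * a) * z ^ p := by rw [← (az.pow_right p).eq]; simp only [mul_assoc]
      _ = _ := by rw [h, pow_succ, pow_succ']; simp only [mul_assoc]

lemma Rel19.nf {a b c d z : G} (R : Rel19 a b c d z) (n : G)
    (hn : n ∈ Subgroup.closure {a, b, c, d}) : ∃ p r t q s : ℕ, n = nf19 a b c d z p r t q s := by
  refine R.induct (P := fun n => ∃ p r t q s : ℕ, n = nf19 a b c d z p r t q s)
    ⟨0, 0, 0, 0, 0, by simp [nf19]⟩ ?_ ?_ ?_ ?_ n hn
  · rintro _ ⟨p, r, t, q, s, rfl⟩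
    exact ⟨p + 1, r, t, q, s, by simp only [nf19, pow_succ', mul_assoc]⟩
  · rintro _ ⟨p, r, t, q, s, rfl⟩
    refine ⟨p, r, t, q + 1, s, ?_⟩
    have : Commute b (a ^ p * c ^ r * z ^ t) :=
      ((R.ab.symm.pow_right p).mul_right (R.cb.symm.pow_right r)).mul_right (R.bz.pow_right t)
    simp only [nf19]
    rw [← mul_assoc, ← mul_assoc, this.eq, pow_succ']; simp only [mul_assoc]
  · rintro _ ⟨p, r, t, q, s, rfl⟩
    refine ⟨p, r + 1, p + t, q, s, ?_⟩
    have e := pow_swap R.ca R.az p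
    have : Commute (z ^ p) (c ^ r) := (R.cz.symm.pow_pow p r)
    calc c * nf19 a b c d z p r t q s = (c * a ^ p) * c ^ r * z ^ t * b ^ q * d ^ s := by
          simp only [nf19, mul_assoc]
      _ = a ^ p * c * (z ^ p * c ^ r) * z ^ t * b ^ q * d ^ s := by rw [e]; simp only [mul_assoc]
      _ = _ := by rw [this.eq, nf19, pow_add z, pow_succ' c]; simp only [mul_assoc]
  · rintro _ ⟨p, r, t, q, s, rfl⟩
    refine ⟨p, r, q + t, q, s + 1, ?_⟩
    have e := pow_swap R.db R.bz q
    have h1 : Commute d (a ^ p * c ^ r * z ^ t) :=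
      ((R.ad.symm.pow_right p).mul_right (R.cd.symm.pow_right r)).mul_right (R.dz.pow_right t)
    have h2 : Commute (z ^ q) (b ^ q * d) := ((R.bz.pow_pow q q).mul_left (R.dz.pow_right q)).symm
    calc d * nf19 a b c d z p r t q s = d * (a ^ p * c ^ r * z ^ t) * b ^ q * d ^ s := by
          simp only [nf19, mul_assoc]
      _ = (a ^ p * c ^ r * z ^ t) * (d * b ^ q) * d ^ s := by rw [h1.eq]; simp only [mul_assoc]
      _ = (a ^ p * c ^ r * z ^ t) * (z ^ q * (b ^ q * d)) * d ^ s := by rw [e, h2.eq]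
      _ = _ := by
        rw [nf19, add_comm, pow_add z, pow_succ' d]; simp only [mul_assoc]

lemma pow_mod_two {a : G} (aa : a * a = 1) (p : ℕ) : a ^ (p % 2) = a ^ p := by
  conv_rhs => rw [← Nat.mod_add_div p 2, pow_add, pow_mul, pow_two, aa, one_pow, mul_one]

lemma Rel19.nf' {a b c d z : G} (R : Rel19 a b c d z) (n : G)
    (hn : n ∈ Subgroup.closure {a, b, c, d}) :
    ∃ v : Fin 2 × Fin 2 × Fin 2 × Fin 2 × Fin 2,
      n = nf19 a b c d z v.1 v.2.1 v.2.2.1 v.2.2.2.1 v.2.2.2.2 := by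
  obtain ⟨p, r, t, q, s, rfl⟩ := R.nf n hn
  refine ⟨(Fin.ofNat 2 p, Fin.ofNat 2 r, Fin.ofNat 2 t, Fin.ofNat 2 q, Fin.ofNat 2 s), ?_⟩
  simp only [nf19, Fin.val_ofNat, pow_mod_two R.aa, pow_mod_two R.bb, pow_mod_two R.cc,
    pow_mod_two R.dd, pow_mod_two R.zz]

end helpers

/-- A permutation representation: image of `x`. -/
def px19 : Equiv.Perm (Fin 24) where
  toFun := ![0, 12, 16, 3, 8, 18, 10, 7, 13, 9, 19, 1, 11, 4, 15, 23, 20, 17, 22, 6, 2, 21, 5, 14]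
  invFun := ![0, 11, 20, 3, 13, 22, 19, 7, 4, 9, 6, 12, 1, 8, 23, 14, 2, 17, 5, 10, 16, 21, 18, 15]
  left_inv := by decide
  right_inv := by decide

/-- A permutation representation: image of `y`. -/
def py19 : Equiv.Perm (Fin 24) where
  toFun := ![4, 19, 7, 2, 17, 14, 13, 3, 22, 1, 8, 23, 15, 18, 21, 20, 11, 0, 6, 9, 12, 5, 10, 16]
  invFun := ![17, 9, 3, 7, 0, 21, 18, 2, 10, 19, 22, 16, 20, 6, 5, 12, 23, 4, 13, 1, 15, 14, 8, 11]
  left_inv := by decide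
  right_inv := by decide

/-- Signature of an element under the representation. -/
def sig19 (g : Equiv.Perm (Fin 24)) : ℕ := (g 0).val * 24 + (g 1).val

/-- Signature of a normal form. -/
def nfsig19 (v : Fin 2 × Fin 2 × Fin 2 × Fin 2 × Fin 2) : ℕ :=
  sig19 (nf19 (px19⁻¹ * py19⁻¹ * px19 * py19) (px19 * py19⁻¹ * px19⁻¹ * py19)
    (px19 * py19 * px19⁻¹ * py19⁻¹) (px19⁻¹ * py19 * px19 * py19⁻¹)
    (px19⁻¹ * py19⁻¹ * px19 * py19 * (px19 * py19 * px19⁻¹ * py19⁻¹) *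
      (px19⁻¹ * py19⁻¹ * px19 * py19 * (px19 * py19 * px19⁻¹ * py19⁻¹)))
    v.1 v.2.1 v.2.2.1 v.2.2.2.1 v.2.2.2.2)

set_option maxRecDepth 100000 in
lemma nfsig_inj : Function.Injective nfsig19 := by
  have h : (Finset.univ.image nfsig19).card = 32 := by decide +kernel
  exact Finset.card_image_iff.1 (by rw [h]; rfl) |> fun h a b e => h (Finset.mem_coe.2 (Finset.mem_univ a)) (Finset.mem_coe.2 (Finset.mem_univ b)) e

/-- The permutation representation of `K`. -/
def phi19 : K19 →* Equiv.Perm (Fin 24) :=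
  PresentedGroup.toGroup (f := ![px19, py19]) (by
    rintro r (rfl | rfl | rfl)
    · simp only [map_pow, FreeGroup.lift_apply_of]; decide +kernel
    · simp only [map_pow, FreeGroup.lift_apply_of]; decide +kernel
    · simp only [map_pow, map_mul, map_inv, FreeGroup.lift_apply_of]; decide +kernel)

/-- Map to the abelianization. -/
def psi19 : K19 →* Multiplicative (ZMod 3) × Multiplicative (ZMod 3) :=
  PresentedGroup.toGroup (f := ![(Multiplicative.ofAdd 1, 1), (1, Multiplicative.ofAdd 1)]) (by
    rintro r (rfl | rfl | rfl)
    · simp only [map_pow, FreeGroup.lift_apply_of]; decide +kernel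
    · simp only [map_pow, FreeGroup.lift_apply_of]; decide +kernel
    · simp only [map_pow, map_mul, map_inv, FreeGroup.lift_apply_of]; decide +kernel)


/-- Generator. -/
def gx19 : K19 := PresentedGroup.of 0
/-- Generator. -/
def gy19 : K19 := PresentedGroup.of 1

lemma gx_cube : gx19 ^ 3 = 1 :=
  (PresentedGroup.one_of_mem (rels := rels19) (x := (FreeGroup.of 0) ^ 3) (by simp [rels19]))

lemma gy_cube : gy19 ^ 3 = 1 :=
  (PresentedGroup.one_of_mem (rels := rels19) (x := (FreeGroup.of 1) ^ 3) (by simp [rels19]))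

lemma ga_sq : (gx19⁻¹ * gy19⁻¹ * gx19 * gy19) * (gx19⁻¹ * gy19⁻¹ * gx19 * gy19) = 1 := by
  rw [← pow_two]
  exact (PresentedGroup.one_of_mem (rels := rels19) (x := ((FreeGroup.of 0)⁻¹ * (FreeGroup.of 1)⁻¹ *
    FreeGroup.of 0 * FreeGroup.of 1) ^ 2) (by simp [rels19]))

lemma g_gen : Subgroup.closure {gx19, gy19} = ⊤ := by
  rw [← PresentedGroup.closure_range_of rels19]
  congr 1
  ext g
  simp [Set.mem_range, Fin.exists_fin_two, gx19, gy19, eq_comm]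

lemma phi_x : phi19 gx19 = px19 := by simp [phi19, gx19]
lemma phi_y : phi19 gy19 = py19 := by simp [phi19, gy19]
lemma psi_x : psi19 gx19 = (Multiplicative.ofAdd 1, 1) := by simp [psi19, gx19]
lemma psi_y : psi19 gy19 = (1, Multiplicative.ofAdd 1) := by simp [psi19, gy19]

/-- z -/
def gz19 : K19 := gx19⁻¹ * gy19⁻¹ * gx19 * gy19 * (gx19 * gy19 * gx19⁻¹ * gy19⁻¹) *
      (gx19⁻¹ * gy19⁻¹ * gx19 * gy19 * (gx19 * gy19 * gx19⁻¹ * gy19⁻¹))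

lemma gRel : Rel19 (gx19⁻¹ * gy19⁻¹ * gx19 * gy19) (gx19 * gy19⁻¹ * gx19⁻¹ * gy19)
    (gx19 * gy19 * gx19⁻¹ * gy19⁻¹) (gx19⁻¹ * gy19 * gx19 * gy19⁻¹) gz19 :=
  mkRel gx_cube gy_cube rfl rfl rfl rfl ga_sq

lemma derived_eq : commutator K19 = N19 gx19 gy19 := N19_eq gx_cube gy_cube g_gen

/-- normal forms in K -/
def knf19 (v : Fin 2 × Fin 2 × Fin 2 × Fin 2 × Fin 2) : K19 :=
  nf19 (gx19⁻¹ * gy19⁻¹ * gx19 * gy19) (gx19 * gy19⁻¹ * gx19⁻¹ * gy19)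
    (gx19 * gy19 * gx19⁻¹ * gy19⁻¹) (gx19⁻¹ * gy19 * gx19 * gy19⁻¹) gz19
    v.1 v.2.1 v.2.2.1 v.2.2.2.1 v.2.2.2.2

lemma sig_knf (v) : sig19 (phi19 (knf19 v)) = nfsig19 v := by
  simp only [knf19, nfsig19, nf19, gz19, map_mul, map_pow, map_inv, phi_x, phi_y]

lemma knf_inj : Function.Injective knf19 := by
  intro v w h
  apply nfsig_inj
  rw [← sig_knf, ← sig_knf, h]

lemma knf_mem (v) : knf19 v ∈ N19 gx19 gy19 := by
  have ma : gx19⁻¹ * gy19⁻¹ * gx19 * gy19 ∈ N19 gx19 gy19 := Subgroup.subset_closure (by simp)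
  have mb : gx19 * gy19⁻¹ * gx19⁻¹ * gy19 ∈ N19 gx19 gy19 := Subgroup.subset_closure (by simp)
  have mc : gx19 * gy19 * gx19⁻¹ * gy19⁻¹ ∈ N19 gx19 gy19 := Subgroup.subset_closure (by simp)
  have md : gx19⁻¹ * gy19 * gx19 * gy19⁻¹ ∈ N19 gx19 gy19 := Subgroup.subset_closure (by simp)
  have mz : gz19 ∈ N19 gx19 gy19 := mul_mem (mul_mem ma mc) (mul_mem ma mc)
  exact mul_mem (mul_mem (mul_mem (mul_mem (pow_mem ma _) (pow_mem mc _)) (pow_mem mz _))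
    (pow_mem mb _)) (pow_mem md _)

lemma card_derived : Nat.card (commutator K19) = 32 := by
  rw [derived_eq]
  have : Function.Bijective (fun v => (⟨knf19 v, knf_mem v⟩ : N19 gx19 gy19)) := by
    refine ⟨fun v w h => knf_inj (Subtype.ext_iff.1 h), fun n => ?_⟩
    obtain ⟨v, hv⟩ := gRel.nf' n.1 n.2
    exact ⟨v, Subtype.ext hv.symm⟩
  rw [← Nat.card_eq_of_bijective _ this]
  simp

lemma psi_word (i j : ℕ) : psi19 (gx19 ^ i * gy19 ^ j) =
    (Multiplicative.ofAdd (i : ZMod 3), Multiplicative.ofAdd (j : ZMod 3)) := by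
  rw [map_mul, map_pow, map_pow, psi_x, psi_y]
  ext <;> simp [← ofAdd_nsmul]

lemma ab_equiv :
    Nonempty (Abelianization K19 ≃* Multiplicative (ZMod 3) × Multiplicative (ZMod 3)) := by
  refine ⟨MulEquiv.ofBijective (Abelianization.lift psi19) ⟨?_, ?_⟩⟩
  · rw [injective_iff_map_eq_one]
    intro g hg
    obtain ⟨g, rfl⟩ := QuotientGroup.mk_surjective g
    have ha : gx19⁻¹ * gy19⁻¹ * gx19 * gy19 ∈ commutator K19 := by
      rw [derived_eq]; exact Subgroup.subset_closure (by simp)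
    obtain ⟨i, j, h⟩ := gen_word gx_cube gy_cube g_gen (commutator K19) ha g
    have h' : (g : K19 ⧸ commutator K19) = ((gx19 ^ i * gy19 ^ j : K19) : K19 ⧸ commutator K19) := h
    have e : psi19 (gx19 ^ i * gy19 ^ j) = 1 := by
      rw [← hg]
      exact (congrArg (Abelianization.lift psi19) h').symm
    rw [psi_word, Prod.mk_eq_one, ofAdd_eq_one, ofAdd_eq_one, ZMod.natCast_eq_zero_iff,
      ZMod.natCast_eq_zero_iff] at e
    obtain ⟨⟨i, rfl⟩, ⟨j, rfl⟩⟩ := e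
    rw [pow_mul, pow_mul, gx_cube, gy_cube, one_pow, one_pow, one_mul] at h'
    exact h'
  · rintro ⟨u, v⟩
    refine ⟨Abelianization.of (gx19 ^ (u.toAdd.val) * gy19 ^ (v.toAdd.val)), ?_⟩
    rw [Abelianization.lift_apply_of, psi_word]
    simp

lemma z_ne : gz19 ≠ 1 := by
  intro h
  have h2 : knf19 (0, 0, 1, 0, 0) = knf19 (0, 0, 0, 0, 0) := by simp [knf19, nf19, h]
  have := knf_inj h2
  revert this
  decide

lemma second_eq : derivedSeries K19 2 = Subgroup.zpowers gz19 := by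
  rw [derivedSeries_succ, derivedSeries_one, derived_eq]
  apply le_antisymm
  · rw [Subgroup.commutator_le]
    intro u hu v hv
    obtain ⟨k, hk⟩ := gRel.swap u v hu hv
    have c1 := (gRel.comm_z u hu).pow_right k
    have c2 := (gRel.comm_z v hv).pow_right k
    have : u * v * u⁻¹ * v⁻¹ = gz19 ^ k := by
      rw [hk, (c2.mul_left c1).eq]; group
    change u * v * u⁻¹ * v⁻¹ ∈ _
    rw [this]
    exact pow_mem (Subgroup.mem_zpowers _) k
  · rw [Subgroup.zpowers_le, gRel.hz]
    exact Subgroup.commutator_mem_commutator (Subgroup.subset_closure (by simp))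
      (Subgroup.subset_closure (by simp))

/-- the group `K = ⟨x, y ∣ x³ = y³ = [x,y]² = 1⟩` has order `288`, its
abelianization `K/K'` is isomorphic to `C_3 × C_3`, and its second derived subgroup
`K''` is isomorphic to `C_2`. -/
theorem stmt19 :
    Nat.card K19 = 288 ∧
    Nonempty (Abelianization K19 ≃* Multiplicative (ZMod 3) × Multiplicative (ZMod 3)) ∧
    Nonempty ((derivedSeries K19 2) ≃* Multiplicative (ZMod 2)) := by
  refine ⟨?_, ab_equiv, ?_⟩
  · obtain ⟨e⟩ := ab_equiv
    have h9 : Nat.card (K19 ⧸ commutator K19) = 9 := by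
      have := Nat.card_congr e.toEquiv
      rw [Nat.card_prod] at this
      have h : Nat.card (Abelianization K19) = 9 := by simpa using this
      exact h
    rw [Subgroup.card_eq_card_quotient_mul_card_subgroup (commutator K19), h9, card_derived]
  · rw [second_eq]
    have : Fact (Nat.Prime 2) := ⟨Nat.prime_two⟩
    have ho : orderOf gz19 = 2 := orderOf_eq_prime (by rw [pow_two]; exact gRel.zz) z_ne
    refine ⟨mulEquivOfPrimeCardEq (p := 2) ?_ ?_⟩
    · rw [Nat.card_zpowers, ho]
    · simp
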